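/- Let P be a partial profile over a finite set A of alternatives, B a partial agenda over A, and p ∈ A. Then p is a necessary successive winner of (P, B) if and only if both of the following hold: (i) in every completion P* of P, p is an (A ∖ Prec_B(p))-majority winner; and (ii) for every alternative c ∈ Prec_B(p) and every completion P* of P, c is not a (Succ_B(c) ∪ {c})-majority winner. -/

import Mathlib

open scoped Classical

/-- The number of voters in profile `prof` who strictly prefer `b` to `c`. -/
noncomputable def prefCount {α : Type*} {n : ℕ} (prof : Fin n → α → α → Prop) (b c : α) : ℕ :=
  (Finset.univ.filter fun i => prof i b c).card

/-- Alternative `b` beats alternative `c`: more than `n/2` voters prefer `b` to `c`. -/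
def Beats {α : Type*} {n : ℕ} (prof : Fin n → α → α → Prop) (b c : α) : Prop :=
  2 * prefCount prof b c > n

/-- `a` is an `S`-majority winner: more than `n/2` voters prefer `a`
to every alternative of `S \ {a}`. -/
def IsMajWinner {α : Type*} {n : ℕ} (prof : Fin n → α → α → Prop) (S : Finset α) (a : α) :
    Prop :=
  2 * (Finset.univ.filter fun i => ∀ c ∈ S, c ≠ a → prof i a c).card > n

/-- The successive winner for the agenda given as a list: the first alternative of the
agenda that is a majority winner with respect to itself and all later alternatives. -/
noncomputable def succWinner {α : Type*} [DecidableEq α] {n : ℕ}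
    (prof : Fin n → α → α → Prop) : List α → Option α
  | [] => none
  | a :: rest =>
    if IsMajWinner prof ((a :: rest).toFinset) a then some a
    else succWinner prof rest

/-- The amendment winner for the agenda given as a list: the current round winner is
challenged by the next alternative on the agenda, which takes over if it beats it. -/
noncomputable def amendWinner {α : Type*} {n : ℕ}
    (prof : Fin n → α → α → Prop) : List α → Option α
  | [] => none
  | a :: rest => some (rest.foldl (fun win c => if Beats prof c win then c else win) a)

/-- `comp` is a completion of the partial profile `prof`: every voter's strict partial
order is replaced by a linear (strict total) order extending it. -/
def Completes {α : Type*} {n : ℕ} (comp prof : Fin n → α → α → Prop) : Prop :=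
  ∀ i, IsStrictTotalOrder α (comp i) ∧ ∀ x y, prof i x y → comp i x y

/-- `L` is a completion of the partial agenda `B`: `L` is an agenda (a linear order on all
alternatives, given as a duplicate-free exhaustive list) extending `B`. -/
def AgendaCompletes {α : Type*} [DecidableEq α] (L : List α) (B : α → α → Prop) : Prop :=
  L.Nodup ∧ (∀ a : α, a ∈ L) ∧ ∀ x y, B x y → L.idxOf x < L.idxOf y

/-- `Prec L p`: the set of alternatives ordered before `p` by the agenda `L`. -/
noncomputable def PrecL {α : Type*} [Fintype α] [DecidableEq α] (L : List α) (p : α) :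
    Finset α :=
  Finset.univ.filter fun c => L.idxOf c < L.idxOf p

/-- `Succ L p`: the set of alternatives ordered after `p` by the agenda `L`. -/
noncomputable def SuccL {α : Type*} [Fintype α] [DecidableEq α] (L : List α) (p : α) :
    Finset α :=
  Finset.univ.filter fun c => L.idxOf p < L.idxOf c

/-- `Prec B p` for a partial agenda `B` (a strict partial order on the alternatives):
the set of alternatives ordered before `p` by `B`. -/
noncomputable def PrecB {α : Type*} [Fintype α] (B : α → α → Prop) (p : α) : Finset α :=
  Finset.univ.filter fun c => B c p

/-- `Succ B p` for a partial agenda `B`: the set of alternatives ordered after `p`. -/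
noncomputable def SuccB {α : Type*} [Fintype α] (B : α → α → Prop) (p : α) : Finset α :=
  Finset.univ.filter fun c => B p c

theorem IsMajWinner.mono {α : Type*} {n : ℕ} {prof : Fin n → α → α → Prop}
    {S T : Finset α} {a : α} (hST : S ⊆ T) (h : IsMajWinner prof T a) :
    IsMajWinner prof S a := by
  unfold IsMajWinner at *
  have hcard : (Finset.univ.filter fun i => ∀ c ∈ T, c ≠ a → prof i a c).card ≤
      (Finset.univ.filter fun i => ∀ c ∈ S, c ≠ a → prof i a c).card := by
    refine Finset.card_le_card fun i hi => ?_
    simp only [Finset.mem_filter, Finset.mem_univ, true_and] at hi ⊢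
    exact fun c hc => hi c (hST hc)
  omega

/-- Two distinct alternatives cannot both be majority winners if each is compared with the other,
since some voter would prefer each of them to the other. -/
theorem IsMajWinner.not_isMajWinner {α : Type*} {n : ℕ} {prof : Fin n → α → α → Prop}
    (hprof : ∀ i, IsStrictOrder α (prof i)) {S T : Finset α} {a b : α}
    (hab : a ≠ b) (hbS : b ∈ S) (haT : a ∈ T) (ha : IsMajWinner prof S a) :
    ¬ IsMajWinner prof T b := by
  intro hb
  unfold IsMajWinner at ha hb
  obtain ⟨i, hi⟩ : ((Finset.univ.filter fun i => ∀ c ∈ S, c ≠ a → prof i a c) ∩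
      (Finset.univ.filter fun i => ∀ c ∈ T, c ≠ b → prof i b c)).Nonempty := by
    apply Finset.inter_nonempty_of_card_lt_card_add_card (Finset.subset_univ _)
      (Finset.subset_univ _)
    rw [Finset.card_univ, Fintype.card_fin]
    omega
  simp only [Finset.mem_inter, Finset.mem_filter, Finset.mem_univ, true_and] at hi
  have := hprof i
  exact irrefl_of (prof i) a (trans_of (prof i) (hi.1 b hbS hab.symm) (hi.2 a haT hab))

theorem succWinner_eq_some_iff {α : Type*} [DecidableEq α] {n : ℕ}
    (prof : Fin n → α → α → Prop) {L : List α} (hL : L.Nodup) (p : α) :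
    succWinner prof L = some p ↔ p ∈ L ∧
      IsMajWinner prof (L.toFinset.filter fun d => L.idxOf p ≤ L.idxOf d) p ∧
      ∀ c, L.idxOf c < L.idxOf p →
        ¬ IsMajWinner prof (L.toFinset.filter fun d => L.idxOf c ≤ L.idxOf d) c := by
  induction L with
  | nil => simp [succWinner]
  | cons a L ih =>
    obtain ⟨haL, hL⟩ := List.nodup_cons.mp hL
    have head : ((a :: L).toFinset.filter fun d => (a :: L).idxOf a ≤ (a :: L).idxOf d) =
        (a :: L).toFinset := by
      simp
    have tail : ∀ c, c ≠ a →
        ((a :: L).toFinset.filter fun d => (a :: L).idxOf c ≤ (a :: L).idxOf d) =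
          L.toFinset.filter fun d => L.idxOf c ≤ L.idxOf d := by
      intro c hc
      ext d
      by_cases hd : d = a
      · subst hd
        simp [List.idxOf_cons_ne _ hc.symm, haL]
      · simp [List.idxOf_cons_ne _ hc.symm, List.idxOf_cons_ne _ (Ne.symm hd), hd]
    rw [succWinner]
    split_ifs with hwin
    · constructor
      · intro h
        obtain rfl : a = p := by simpa using h
        rw [head]
        exact ⟨by simp, hwin, by simp⟩
      · rintro ⟨-, -, h⟩
        by_contra hne
        have hne : a ≠ p := fun h => hne (congrArg some h)
        refine h a ?_ (by rwa [head])
        simp [List.idxOf_cons_ne _ hne]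
    · rw [ih hL]
      by_cases hp : p = a
      · subst hp
        rw [head]
        exact iff_of_false (fun h => haL h.1) (fun h => hwin h.2.1)
      · rw [tail p hp, List.mem_cons, or_iff_right hp]
        refine and_congr_right fun _ => and_congr_right fun _ =>
          ⟨fun h c hc => ?_, fun h c hc => ?_⟩
        · by_cases hca : c = a
          · subst hca
            rwa [head]
          · rw [tail c hca]
            refine h c ?_
            simpa [List.idxOf_cons_ne _ (Ne.symm hca), List.idxOf_cons_ne _ (Ne.symm hp)] using hc
        · have hca : c ≠ a := by
            rintro rfl
            rw [List.idxOf_eq_length haL] at hc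
            have := List.idxOf_le_length (a := p) (l := L)
            omega
          rw [← tail c hca]
          refine h c ?_
          simpa [List.idxOf_cons_ne _ (Ne.symm hca), List.idxOf_cons_ne _ (Ne.symm hp)] using hc

theorem exists_agendaCompletes {α : Type*} [Fintype α] [DecidableEq α] (R : α → α → Prop)
    (hR : IsStrictOrder α R) : ∃ L : List α, AgendaCompletes L R := by
  obtain ⟨s, hs, hRs⟩ := @extend_partialOrder α (fun x y => x = y ∨ R x y)
    { refl := fun x => Or.inl rfl
      trans := by
        rintro x y z (rfl | hxy) (rfl | hyz)
        exacts [Or.inl rfl, Or.inr hyz, Or.inr hxy, Or.inr (trans_of R hxy hyz)]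
      antisymm := by
        rintro x y (rfl | hxy) (h | hyx)
        exacts [rfl, rfl, h.symm, (irrefl_of R x (trans_of R hxy hyx)).elim] }
  refine ⟨Finset.univ.sort s, Finset.sort_nodup _ _, by simp, fun x y hxy => ?_⟩
  by_contra! hle
  have hx : x ∈ Finset.univ.sort s := by simp
  have hy : y ∈ Finset.univ.sort s := by simp
  have hne : x ≠ y := by
    rintro rfl
    exact irrefl_of R x hxy
  have hlt := lt_of_le_of_ne hle fun h => hne ((List.idxOf_inj hy).mp h).symm
  have hyx := List.pairwise_iff_getElem.mp (Finset.pairwise_sort Finset.univ s) _ _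
    (List.idxOf_lt_length_iff.mpr hy) (List.idxOf_lt_length_iff.mpr hx) hlt
  rw [List.getElem_idxOf, List.getElem_idxOf] at hyx
  exact hne (antisymm_of s (hRs x y (Or.inr hxy)) hyx)

/-- A partial agenda has a completion that sorts by any given weakly monotone key. -/
theorem exists_agendaCompletes_of_monotone {α : Type*} [Fintype α] [DecidableEq α]
    {B : α → α → Prop} (hB : IsStrictOrder α B) (f : α → ℕ) (hf : ∀ x y, B x y → f x ≤ f y) :
    ∃ L : List α, AgendaCompletes L B ∧ ∀ x y, f x < f y → L.idxOf x < L.idxOf y := by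
  obtain ⟨L, hnodup, hmem, hlt⟩ := exists_agendaCompletes (fun x y => B x y ∨ f x < f y)
    { irrefl := by
        rintro x (h | h)
        exacts [irrefl_of B x h, lt_irrefl _ h]
      trans := by
        rintro x y z (hxy | hxy) (hyz | hyz)
        · exact Or.inl (trans_of B hxy hyz)
        · exact Or.inr ((hf x y hxy).trans_lt hyz)
        · exact Or.inr (hxy.trans_le (hf y z hyz))
        · exact Or.inr (hxy.trans hyz) }
  exact ⟨L, ⟨hnodup, hmem, fun x y h => hlt x y (Or.inl h)⟩, fun x y h => hlt x y (Or.inr h)⟩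

theorem exists_agendaCompletes_prec {α : Type*} [Fintype α] [DecidableEq α]
    {B : α → α → Prop} (hB : IsStrictOrder α B) (p : α) :
    ∃ L : List α, AgendaCompletes L B ∧ ∀ x, L.idxOf x < L.idxOf p → B x p := by
  obtain ⟨L, hL, hlt⟩ := exists_agendaCompletes_of_monotone hB
    (fun x => if B x p then 0 else if x = p then 1 else 2) (by
      intro x y hxy
      by_cases hy : B y p
      · simp [trans_of B hxy hy]
      · by_cases hyp : y = p
        · subst hyp
          simp [hxy]
        · simp only [hy, hyp, if_false]
          split_ifs <;> omega)
  refine ⟨L, hL, fun x hx => ?_⟩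
  by_contra hxp
  have hne : x ≠ p := by
    rintro rfl
    exact lt_irrefl _ hx
  exact hx.not_gt (hlt p x (by simp [irrefl_of B p, hxp, hne]))

theorem exists_agendaCompletes_succ {α : Type*} [Fintype α] [DecidableEq α]
    {B : α → α → Prop} (hB : IsStrictOrder α B) (c : α) :
    ∃ L : List α, AgendaCompletes L B ∧ ∀ x, L.idxOf c < L.idxOf x → B c x := by
  obtain ⟨L, hL, hlt⟩ := exists_agendaCompletes_of_monotone hB
    (fun x => if B c x then 2 else if x = c then 1 else 0) (by
      intro x y hxy
      by_cases hx : B c x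
      · simp [hx, trans_of B hx hxy]
      · by_cases hxc : x = c
        · subst hxc
          simp [hxy, hx]
        · simp [hx, hxc])
  refine ⟨L, hL, fun x hx => ?_⟩
  by_contra hcx
  have hne : x ≠ c := by
    rintro rfl
    exact lt_irrefl _ hx
  exact hx.not_gt (hlt x c (by simp [irrefl_of B c, hcx, hne]))

/-- `p` is a necessary successive winner of the partial profile `prof` together with the
partial agenda `B` iff (i) in every completion of the profile, `p` is an
`(A ∖ Prec_B(p))`-majority winner, and (ii) for every `c ∈ Prec_B(p)` and every completion
of the profile, `c` is not a `(Succ_B(c) ∪ {c})`-majority winner. -/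
theorem stmt16 {α : Type*} [Fintype α] [DecidableEq α] {n : ℕ}
    (prof : Fin n → α → α → Prop) (hpo : ∀ i, IsStrictOrder α (prof i))
    (B : α → α → Prop) (hB : IsStrictOrder α B) (p : α) :
    (∀ (comp : Fin n → α → α → Prop) (L : List α),
        Completes comp prof → AgendaCompletes L B → succWinner comp L = some p) ↔
    ((∀ comp : Fin n → α → α → Prop, Completes comp prof →
        IsMajWinner comp (Finset.univ \ PrecB B p) p) ∧
      (∀ c ∈ PrecB B p, ∀ comp : Fin n → α → α → Prop, Completes comp prof →
        ¬ IsMajWinner comp (insert c (SuccB B c)) c)) := by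
  constructor
  · refine fun h => ⟨fun comp hcomp => ?_, fun c hc comp hcomp hwin => ?_⟩
    · obtain ⟨L, hL, hprec⟩ := exists_agendaCompletes_prec hB p
      refine ((succWinner_eq_some_iff comp hL.1 p).mp (h comp L hcomp hL)).2.1.mono fun d hd => ?_
      simp only [PrecB, Finset.mem_sdiff, Finset.mem_filter, Finset.mem_univ, true_and] at hd
      simp only [Finset.mem_filter, List.mem_toFinset, hL.2.1, true_and]
      by_contra! hlt
      exact hd (hprec d hlt)
    · obtain ⟨L, hL, hsucc⟩ := exists_agendaCompletes_succ hB c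
      have hcp : B c p := by simpa [PrecB] using hc
      refine ((succWinner_eq_some_iff comp hL.1 p).mp (h comp L hcomp hL)).2.2 c
        (hL.2.2 c p hcp) (hwin.mono fun d hd => ?_)
      simp only [Finset.mem_filter, List.mem_toFinset, hL.2.1, true_and] at hd
      simp only [SuccB, Finset.mem_insert, Finset.mem_filter, Finset.mem_univ, true_and]
      rcases hd.eq_or_lt with heq | hlt
      · exact Or.inl ((List.idxOf_inj (hL.2.1 c)).mp heq).symm
      · exact Or.inr (hsucc d hlt)
  · rintro ⟨hmaj, hprec⟩ comp L hcomp hL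
    refine (succWinner_eq_some_iff comp hL.1 p).mpr ⟨hL.2.1 p, ?_, fun c hc hwin => ?_⟩
    · refine (hmaj comp hcomp).mono fun d hd => ?_
      simp only [Finset.mem_filter, List.mem_toFinset, hL.2.1, true_and] at hd
      simp only [PrecB, Finset.mem_sdiff, Finset.mem_filter, Finset.mem_univ, true_and]
      exact fun hdp => hd.not_gt (hL.2.2 d p hdp)
    · by_cases hcp : B c p
      · refine hprec c (by simpa [PrecB] using hcp) comp hcomp (hwin.mono fun d hd => ?_)
        simp only [SuccB, Finset.mem_insert, Finset.mem_filter, Finset.mem_univ, true_and] at hd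
        simp only [Finset.mem_filter, List.mem_toFinset, hL.2.1, true_and]
        rcases hd with rfl | hcd
        · exact le_rfl
        · exact (hL.2.2 c d hcd).le
      · have hne : c ≠ p := by
          rintro rfl
          exact lt_irrefl _ hc
        refine hwin.not_isMajWinner (fun i => ?_) hne ?_ ?_ (hmaj comp hcomp)
        · have := (hcomp i).1
          infer_instance
        · simpa [hL.2.1] using hc.le
        · simpa [PrecB] using hcp
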